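/- For every n ≥ 2, every nondeterministic U_2-circuit computing the parity function Parity_n (with any number of guess inputs) has at least 3(n-1) gates. -/

import Mathlib

/-- A Boolean circuit with input index type `ι`. It is given as a straight-line
program: each gate has fan-in 2, and each of its two incoming wires comes from
an input node (a variable in `ι` or a Boolean constant) or from an earlier gate.
The output is a designated node (an input node or a gate). -/
structure Circuit (ι : Type) : Type where
  size : ℕ
  gate : Fin size → Bool → Bool → Bool
  in1 : (g : Fin size) → (ι ⊕ Bool) ⊕ Fin g.val
  in2 : (g : Fin size) → (ι ⊕ Bool) ⊕ Fin g.val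
  out : (ι ⊕ Bool) ⊕ Fin size

namespace Circuit

variable {ι : Type}

/-- The value carried by the output of gate `g` on input assignment `x`. -/
def nodeVal (C : Circuit ι) (x : ι → Bool) : (g : Fin C.size) → Bool
  | g =>
    C.gate g
      (match C.in1 g with
       | .inl (.inl i) => x i
       | .inl (.inr b) => b
       | .inr h => C.nodeVal x ⟨h.val, h.isLt.trans g.isLt⟩)
      (match C.in2 g with
       | .inl (.inl i) => x i
       | .inl (.inr b) => b
       | .inr h => C.nodeVal x ⟨h.val, h.isLt.trans g.isLt⟩)
  termination_by g => g.val
  decreasing_by all_goals exact h.isLt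

/-- The output value of the circuit on input assignment `x`. -/
def eval (C : Circuit ι) (x : ι → Bool) : Bool :=
  match C.out with
  | .inl (.inl i) => x i
  | .inl (.inr b) => b
  | .inr g => C.nodeVal x g

end Circuit

/-- A two-input Boolean function is in `U₂` iff it is neither XOR nor XNOR. -/
def IsU2 (f : Bool → Bool → Bool) : Prop :=
  f ≠ xor ∧ f ≠ fun a b => !(xor a b)

/-- A `U₂`-circuit: every gate is labeled by a function in `U₂`. -/
def Circuit.IsU2Circuit {ι : Type} (C : Circuit ι) : Prop :=
  ∀ g, IsU2 (C.gate g)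

/-- A deterministic circuit computes `f` if it outputs `f x` on every input `x`. -/
def Circuit.Computes {n : ℕ} (C : Circuit (Fin n)) (f : (Fin n → Bool) → Bool) : Prop :=
  ∀ x, C.eval x = f x

/-- A nondeterministic circuit (with `n` actual inputs and `m` guess inputs)
computes `f` if for every actual input `x`, `f x = 1` iff some setting of the
guess inputs makes the circuit output `1`. -/
def Circuit.ComputesND {n m : ℕ} (C : Circuit (Fin n ⊕ Fin m))
    (f : (Fin n → Bool) → Bool) : Prop :=
  ∀ x, f x = true ↔ ∃ y : Fin m → Bool, C.eval (Sum.elim x y) = true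

/-- `sizeDC f`: the size of the smallest deterministic `U₂`-circuit computing `f`. -/
noncomputable def sizeDC {n : ℕ} (f : (Fin n → Bool) → Bool) : ℕ :=
  sInf {s | ∃ C : Circuit (Fin n), C.IsU2Circuit ∧ C.Computes f ∧ C.size = s}

/-- `sizeNDC f`: the size of the smallest nondeterministic `U₂`-circuit computing `f`. -/
noncomputable def sizeNDC {n : ℕ} (f : (Fin n → Bool) → Bool) : ℕ :=
  sInf {s | ∃ m : ℕ, ∃ C : Circuit (Fin n ⊕ Fin m),
    C.IsU2Circuit ∧ C.ComputesND f ∧ C.size = s}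

/-- `Parity_n`. -/
def parity (n : ℕ) (x : Fin n → Bool) : Bool :=
  decide ((∑ i, (x i).toNat) % 2 = 1)

/-!
A gate outside `{⊕, ≡}` is, up to negations, an AND of two literals or degenerate. So consider
circuits of AND gates on literals, several of whose literals are required to be true, and count
gates plus required literals as their cost. Suppose that such a circuit nondeterministically
computes the parity of its actual inputs, or the complement of it.

If an input `i` feeds two gates, fixing `i` so that one of them becomes constant lowers the cost by
three: both gates disappear, and the constant simplifies a gate or a required literal that reads it.
If `i` feeds a single gate `g`, then the other fan-in of `g` must be true under every accepting
assignment, because otherwise flipping `i` would go unnoticed. Thanks to nondeterminism that fan-in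
may be required to be true outright, which turns `g` into a literal at no cost and lets the
argument continue with fewer gates. A single remaining input still costs at least one, so
`3 * n ≤ cost + 2`, where the cost of the original circuit is its size plus one.
-/

/-! ### Circuits of AND gates -/

/-- A literal over the nodes `V`: the node `node`, negated if `neg` is set. The constant `neg` is
encoded by `node = none`. -/
structure Literal (V : Type*) where
  node : Option V
  neg : Bool
  deriving DecidableEq

namespace Literal

variable {V : Type*}

/-- The constant literal `b`. -/
def const (b : Bool) : Literal V := ⟨none, b⟩

/-- The value of a literal under an assignment of values to the nodes. -/
def eval (v : V → Bool) (l : Literal V) : Bool := xor (l.node.elim false v) l.neg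

/-- The literal obtained from `l` by applying the unary Boolean function `φ` to its value. -/
def map (φ : Bool → Bool) (l : Literal V) : Literal V :=
  if φ false = φ true then const (φ false) else ⟨l.node, xor l.neg (φ false)⟩

/-- The literal `l` can feed a node `g`: it is constant or its node precedes `g`. -/
def Below [LT V] (g : V) (l : Literal V) : Prop := ∀ w ∈ l.node, w < g

@[simp]
theorem node_const (b : Bool) : (const b : Literal V).node = none := rfl

@[simp]
theorem eval_const (v : V → Bool) (b : Bool) : (const b).eval v = b := by
  simp [const, eval]

theorem eval_map (v : V → Bool) (φ : Bool → Bool) (l : Literal V) :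
    (l.map φ).eval v = φ (l.eval v) := by
  unfold map
  split_ifs with h
  · rw [eval_const]
    cases l.eval v
    exacts [rfl, h]
  · have heval : eval v ⟨l.node, xor l.neg (φ false)⟩ = xor (l.eval v) (φ false) :=
      (Bool.xor_assoc _ _ _).symm
    rw [heval]
    cases l.eval v <;> simp [Bool.eq_not_of_ne (Ne.symm h)]

theorem exists_eval_eq_and (k l : Literal V) (h : k.node = none ∨ k.node = l.node) :
    ∃ m : Literal V, (m.node = none ∨ m.node = l.node) ∧
      ∀ v, m.eval v = (k.eval v && l.eval v) := by
  rcases h with hk | hkl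
  · cases hs : k.neg
    · exact ⟨const false, .inl rfl, fun v ↦ by simp [eval, const, hk, hs]⟩
    · exact ⟨l, .inr rfl, fun v ↦ by simp [eval, hk, hs]⟩
  · by_cases hs : k.neg = l.neg
    · exact ⟨l, .inr rfl, fun v ↦ by simp [eval, hkl, hs]⟩
    · refine ⟨const false, .inl rfl, fun v ↦ ?_⟩
      rw [eval_const, eval, eval, hkl, Bool.eq_not_of_ne hs]
      cases l.node.elim false v <;> cases l.neg <;> rfl

section Subst

variable [DecidableEq V]

/-- The literal `k` with the literal `l` substituted for the node `n`. -/
def subst (k : Literal V) (n : V) (l : Literal V) : Literal V :=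
  if k.node = some n then ⟨l.node, xor l.neg k.neg⟩ else k

theorem subst_of_node_ne {n : V} {l k : Literal V} (h : k.node ≠ some n) : k.subst n l = k :=
  if_neg h

theorem eval_subst (v : V → Bool) (n : V) (l k : Literal V) :
    (k.subst n l).eval v = k.eval (Function.update v n (l.eval v)) := by
  obtain ⟨_ | w, s⟩ := k
  · rfl
  · by_cases hw : w = n <;> simp [subst, eval, hw]

theorem eval_update_of_node_ne {n : V} {k : Literal V} (h : k.node ≠ some n) (v : V → Bool)
    (b : Bool) : k.eval (Function.update v n b) = k.eval v := by
  rw [← eval_const v b, ← eval_subst, subst_of_node_ne h]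

theorem Below.subst [Preorder V] {n g : V} {l k : Literal V} (hl : l.Below n) (hk : k.Below g) :
    (k.subst n l).Below g := by
  unfold Literal.subst
  split_ifs with h
  · exact fun w hw ↦ (hl w hw).trans (hk n h)
  · exact hk

end Subst

theorem Below.of_node_eq [LT V] {g : V} {l m : Literal V} (hl : l.Below g)
    (h : m.node = none ∨ m.node = l.node) : m.Below g := by
  rintro w hw
  rcases h with h | h
  · simp [h] at hw
  · exact hl w (h ▸ hw)

theorem below_const [LT V] (g : V) (b : Bool) : (const b).Below g := by
  simp [Below]

theorem Below.node_ne [Preorder V] {g : V} {l : Literal V} (h : l.Below g) :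
    l.node ≠ some g :=
  fun hg ↦ lt_irrefl g (h g hg)

theorem Below.map [LT V] {g : V} {l : Literal V} (h : l.Below g) (φ : Bool → Bool) :
    (l.map φ).Below g := by
  refine h.of_node_eq ?_
  unfold Literal.map
  split_ifs
  · exact .inl rfl
  · exact .inr rfl

end Literal

/-- A circuit of AND gates whose wires carry literals. The gate `g` reads `fanin g false` and
`fanin g true`, and all literals in `outputs` are required to be true. The nodes that are not
gates are inputs; `fanin` is junk there. -/
structure AndCircuit (V : Type*) where
  gates : Finset V
  fanin : V → Bool → Literal V
  outputs : Finset (Literal V)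

/-- `f` changes its value whenever a single coordinate in `X` is flipped: as a function of the
coordinates in `X`, it is their parity or the complement of it. -/
def Alternating {V : Type*} [DecidableEq V] (X : Finset V) (f : (V → Bool) → Prop) : Prop :=
  ∀ i ∈ X, ∀ x, f (Function.update x i (!x i)) ↔ ¬f x

namespace Alternating

variable {V : Type*} [DecidableEq V] {X : Finset V} {f : (V → Bool) → Prop}

theorem exists_true (hf : Alternating X f) (hX : X.Nonempty) : ∃ x, f x := by
  obtain ⟨i, hi⟩ := hX
  by_contra! h
  exact h _ ((hf i hi fun _ ↦ false).2 (h _))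

theorem exists_false (hf : Alternating X f) (hX : X.Nonempty) : ∃ x, ¬f x := by
  obtain ⟨i, hi⟩ := hX
  by_contra! h
  exact (hf i hi fun _ ↦ false).1 (h _) (h _)

theorem restrict (hf : Alternating X f) (i : V) (b : Bool) :
    Alternating (X.erase i) fun x ↦ f (Function.update x i b) := by
  intro j hj x
  have hji := Finset.ne_of_mem_erase hj
  have := hf j (Finset.mem_of_mem_erase hj) (Function.update x i b)
  rwa [Function.update_of_ne hji, Function.update_comm hji.symm] at this

theorem of_injective {ι : Type*} [Fintype ι] [DecidableEq ι] {e : ι → V}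
    (he : Function.Injective e) {F : (ι → Bool) → Bool}
    (hF : ∀ x i, F (Function.update x i (!x i)) = !F x) :
    Alternating (Finset.univ.image e) fun x ↦ F (x ∘ e) = true := by
  refine Finset.forall_mem_image.2 fun i _ x ↦ ?_
  beta_reduce
  rw [Function.update_comp_eq_of_injective x he, Bool.not_eq_true, ← Bool.not_eq_true', ← hF]
  rfl

end Alternating

namespace AndCircuit

variable {V : Type*}

/-- The number of gates and outputs. -/
def cost (P : AndCircuit V) : ℕ := P.gates.card + P.outputs.card

/-- The value that the gate `g` computes from the values `v` of the nodes. -/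
def gateVal (P : AndCircuit V) (v : V → Bool) (g : V) : Bool :=
  (P.fanin g false).eval v && (P.fanin g true).eval v

/-- The values `v` of the nodes are consistent with the gates and make all outputs true. -/
def Sat (P : AndCircuit V) (v : V → Bool) : Prop :=
  (∀ g ∈ P.gates, v g = P.gateVal v g) ∧ ∀ o ∈ P.outputs, o.eval v = true

/-- The fan-in of the node `g` contains the node `a`, where `none` stands for a constant. -/
def Reads (P : AndCircuit V) (g : V) (a : Option V) : Prop := ∃ s, (P.fanin g s).node = a

/-- The node `a` is read by a gate or is an output, where `none` stands for a constant. -/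
def Occurs (P : AndCircuit V) (a : Option V) : Prop :=
  (∃ g ∈ P.gates, P.Reads g a) ∨ ∃ o ∈ P.outputs, o.node = a

/-- The order of the nodes is topological for the circuit. -/
def Ordered [LT V] (P : AndCircuit V) : Prop := ∀ g ∈ P.gates, ∀ s, (P.fanin g s).Below g

/-- `P` computes `f` on the inputs `X`, nondeterministically in the remaining inputs. Although `f`
takes values for all nodes, `spec` forces it to depend only on those in `X`. -/
structure Computes [LT V] (P : AndCircuit V) (X : Finset V) (f : (V → Bool) → Prop) : Prop where
  ordered : P.Ordered
  disjoint : Disjoint X P.gates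
  spec : ∀ x, f x ↔ ∃ v, P.Sat v ∧ Set.EqOn v x X

theorem gateVal_eq (P : AndCircuit V) (v : V → Bool) (g : V) (s : Bool) :
    P.gateVal v g = ((P.fanin g s).eval v && (P.fanin g (!s)).eval v) := by
  cases s
  · rfl
  · exact Bool.and_comm _ _

theorem exists_literal_eval_eq_gateVal (P : AndCircuit V) {g : V} {s : Bool}
    (h : (P.fanin g s).node = none ∨ (P.fanin g s).node = (P.fanin g (!s)).node) :
    ∃ l : Literal V, (l.node = none ∨ l.node = (P.fanin g (!s)).node) ∧
      ∀ v, l.eval v = P.gateVal v g := by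
  simpa only [P.gateVal_eq _ g s] using Literal.exists_eval_eq_and _ _ h

theorem Ordered.not_reads_self [Preorder V] {P : AndCircuit V} (h : P.Ordered) {g : V}
    (hg : g ∈ P.gates) : ¬P.Reads g (some g) :=
  fun ⟨s, hs⟩ ↦ (h g hg s).node_ne hs

theorem Ordered.not_reads_of_reads [Preorder V] {P : AndCircuit V} (h : P.Ordered) {g k : V}
    (hg : g ∈ P.gates) (hk : k ∈ P.gates) (hkg : P.Reads k (some g)) : ¬P.Reads g (some k) := by
  obtain ⟨s, hs⟩ := hkg
  exact fun ⟨t, ht⟩ ↦ lt_asymm (h k hk s g hs) (h g hg t k ht)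

section Computes

variable [LT V] {P Q : AndCircuit V} {X : Finset V} {f : (V → Bool) → Prop}

theorem Computes.notMem_gates (h : P.Computes X f) {i : V} (hi : i ∈ X) : i ∉ P.gates :=
  Finset.disjoint_left.1 h.disjoint hi

theorem Computes.of_sat (h : P.Computes X f) {v : V → Bool} (hv : P.Sat v) : f v :=
  (h.spec v).2 ⟨v, hv, Set.eqOn_refl v X⟩

theorem Computes.transfer (h : P.Computes X f) (hord : Q.Ordered) (hgates : Q.gates ⊆ P.gates)
    (hQP : ∀ v, Q.Sat v → ∃ w, P.Sat w ∧ Set.EqOn w v X) (hPQ : ∀ v, P.Sat v → Q.Sat v) :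
    Q.Computes X f where
  ordered := hord
  disjoint := h.disjoint.mono_right hgates
  spec x := by
    rw [h.spec]
    constructor
    · rintro ⟨v, hv, hvx⟩
      exact ⟨v, hPQ v hv, hvx⟩
    · rintro ⟨v, hv, hvx⟩
      obtain ⟨w, hw, hwv⟩ := hQP v hv
      exact ⟨w, hw, hwv.trans hvx⟩

/-- Without gates and outputs, every assignment is satisfying. -/
theorem Computes.cost_pos (h : P.Computes X f) (hf : ∃ x, ¬f x) : 0 < P.cost := by
  obtain ⟨x, hx⟩ := hf
  by_contra! hcost
  obtain ⟨hgates, houtputs⟩ : P.gates = ∅ ∧ P.outputs = ∅ := by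
    simpa [cost] using hcost
  exact hx (h.of_sat ⟨by simp [hgates], by simp [houtputs]⟩)

end Computes

section Operations

variable [DecidableEq V]

/-- The circuit `P` with `g` turned from a gate into an input. -/
def eraseGate (P : AndCircuit V) (g : V) : AndCircuit V := { P with gates := P.gates.erase g }

/-- The circuit `P` with the literal `o` as an additional output. -/
def addOutput (P : AndCircuit V) (o : Literal V) : AndCircuit V :=
  { P with outputs := insert o P.outputs }

/-- The circuit `P` with the node `n` deleted and the literal `l` substituted for it. -/
def subst (P : AndCircuit V) (n : V) (l : Literal V) : AndCircuit V where
  gates := P.gates.erase n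
  fanin g s := (P.fanin g s).subst n l
  outputs := P.outputs.image fun o ↦ o.subst n l

variable {P : AndCircuit V}

theorem fanin_subst (P : AndCircuit V) (n : V) (l : Literal V) (g : V) (s : Bool) :
    (P.subst n l).fanin g s = (P.fanin g s).subst n l := rfl

theorem gateVal_subst (P : AndCircuit V) (n : V) (l : Literal V) (v : V → Bool) (g : V) :
    (P.subst n l).gateVal v g = P.gateVal (Function.update v n (l.eval v)) g := by
  simp only [gateVal, subst, Literal.eval_subst]

theorem gateVal_update_of_not_reads {g n : V} (h : ¬P.Reads g (some n)) (v : V → Bool)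
    (b : Bool) : P.gateVal (Function.update v n b) g = P.gateVal v g := by
  have hn : ∀ s, (P.fanin g s).node ≠ some n := fun s hs ↦ h ⟨s, hs⟩
  simp only [gateVal, Literal.eval_update_of_node_ne (hn _)]

theorem sat_iff_eraseGate {g : V} (hg : g ∈ P.gates) (v : V → Bool) :
    P.Sat v ↔ v g = P.gateVal v g ∧ (P.eraseGate g).Sat v := by
  simp only [Sat, ← and_assoc]
  nth_rw 1 [← Finset.insert_erase hg]
  rw [Finset.forall_mem_insert]
  rfl

theorem sat_subst (P : AndCircuit V) (n : V) (l : Literal V) (v : V → Bool) :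
    (P.subst n l).Sat v ↔ (P.eraseGate n).Sat (Function.update v n (l.eval v)) := by
  simp only [Sat, gateVal_subst]
  refine and_congr (forall₂_congr fun g hg ↦ ?_) ?_
  · rw [Function.update_of_ne (Finset.ne_of_mem_erase hg)]
    rfl
  · simp only [subst, eraseGate, Finset.forall_mem_image, Literal.eval_subst]

theorem eraseGate_of_notMem {g : V} (hg : g ∉ P.gates) : P.eraseGate g = P := by
  rw [eraseGate, Finset.erase_eq_of_notMem hg]

/-- If flipping the value of `i` made no gate change its value, the result would still be
satisfying. -/
theorem Sat.exists_sensitive_gate {v : V → Bool} (hv : P.Sat v) {i : V} (hi : i ∉ P.gates)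
    (hout : ∀ o ∈ P.outputs, o.node ≠ some i) {b : Bool}
    (hflip : ¬P.Sat (Function.update v i b)) :
    ∃ g ∈ P.gates, P.Reads g (some i) ∧
      ∀ s, (P.fanin g s).node = some i ∨ (P.fanin g s).eval v = true := by
  by_contra! h
  refine hflip ⟨fun g hg ↦ ?_, fun o ho ↦ ?_⟩
  · rw [Function.update_of_ne (ne_of_mem_of_not_mem hg hi), hv.1 g hg]
    by_cases hgi : P.Reads g (some i)
    · obtain ⟨s, hs, hfalse⟩ := h g hg hgi
      rw [P.gateVal_eq _ g s, P.gateVal_eq _ g s, Literal.eval_update_of_node_ne hs,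
        Bool.eq_false_of_not_eq_true hfalse, Bool.false_and, Bool.false_and]
    · rw [gateVal_update_of_not_reads hgi]
  · rw [Literal.eval_update_of_node_ne (hout o ho)]
    exact hv.2 o ho

theorem Reads.subst {g n : V} {a : Option V} {l : Literal V} (h : P.Reads g a)
    (ha : a ≠ some n) : (P.subst n l).Reads g a := by
  obtain ⟨s, hs⟩ := h
  exact ⟨s, (congrArg Literal.node (Literal.subst_of_node_ne (hs ▸ ha))).trans hs⟩

theorem Reads.subst_node {g n : V} (h : P.Reads g (some n)) (l : Literal V) :
    (P.subst n l).Reads g l.node := by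
  obtain ⟨s, hs⟩ := h
  exact ⟨s, by simp [AndCircuit.subst, Literal.subst, hs]⟩

theorem Occurs.subst {n : V} {a : Option V} {l : Literal V} (h : P.Occurs a) (ha : a ≠ some n)
    (hn : n ∈ P.gates → ¬P.Reads n a) : (P.subst n l).Occurs a := by
  rcases h with ⟨g, hg, hga⟩ | ⟨o, ho, hoa⟩
  · refine .inl ⟨g, Finset.mem_erase.2 ⟨?_, hg⟩, hga.subst ha⟩
    rintro rfl
    exact hn hg hga
  · refine .inr ⟨o, Finset.mem_image.2 ⟨o, ho, ?_⟩, hoa⟩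
    exact Literal.subst_of_node_ne (hoa ▸ ha)

theorem Occurs.subst_node {n : V} (h : P.Occurs (some n)) (hn : n ∈ P.gates → ¬P.Reads n (some n))
    (l : Literal V) : (P.subst n l).Occurs l.node := by
  rcases h with ⟨g, hg, hgn⟩ | ⟨o, ho, hon⟩
  · refine .inl ⟨g, Finset.mem_erase.2 ⟨?_, hg⟩, hgn.subst_node l⟩
    rintro rfl
    exact hn hg hgn
  · exact .inr ⟨_, Finset.mem_image_of_mem _ ho, by simp [Literal.subst, hon]⟩

theorem card_gates_subst_add_one {g : V} (hg : g ∈ P.gates) (l : Literal V) :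
    (P.subst g l).gates.card + 1 = P.gates.card :=
  Finset.card_erase_add_one hg

theorem cost_subst_add_one_le {g : V} (hg : g ∈ P.gates) (l : Literal V) :
    (P.subst g l).cost + 1 ≤ P.cost := by
  have hgates := card_gates_subst_add_one hg l
  have houtputs : (P.subst g l).outputs.card ≤ P.outputs.card := Finset.card_image_le
  unfold cost
  omega

theorem cost_subst_le (P : AndCircuit V) (n : V) (l : Literal V) : (P.subst n l).cost ≤ P.cost :=
  add_le_add Finset.card_erase_le Finset.card_image_le

theorem cost_addOutput_le (P : AndCircuit V) (o : Literal V) : (P.addOutput o).cost ≤ P.cost + 1 :=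
  add_le_add_right (Finset.card_insert_le o P.outputs) P.gates.card

end Operations

namespace Computes

variable [DecidableEq V] [LT V] {P : AndCircuit V} {X : Finset V} {f : (V → Bool) → Prop}

theorem eqOn_update (h : P.Computes X f) {g : V} (hg : g ∈ P.gates) (v : V → Bool) (b : Bool) :
    Set.EqOn (Function.update v g b) v X :=
  fun _ hi ↦ Function.update_of_ne (ne_of_mem_of_not_mem hg (h.notMem_gates hi)).symm _ _

theorem eraseGate (h : P.Computes X f) {g : V} (hg : g ∈ P.gates) (hocc : ¬P.Occurs (some g)) :
    (P.eraseGate g).Computes X f := by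
  have hread : ∀ k ∈ P.gates, ¬P.Reads k (some g) := fun k hk hkg ↦ hocc (.inl ⟨k, hk, hkg⟩)
  refine h.transfer (fun k hk ↦ h.ordered k (Finset.mem_of_mem_erase hk)) (Finset.erase_subset _ _)
    (fun v hv ↦ ?_) fun v hv ↦ ((sat_iff_eraseGate hg v).1 hv).2
  refine ⟨Function.update v g (P.gateVal v g), (sat_iff_eraseGate hg _).2 ⟨?_, ?_, ?_⟩,
    h.eqOn_update hg v _⟩
  · rw [Function.update_self, gateVal_update_of_not_reads (hread g hg)]
  · intro k hk
    rw [Function.update_of_ne (Finset.ne_of_mem_erase hk)]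
    exact (hv.1 k hk).trans
      (gateVal_update_of_not_reads (hread k (Finset.mem_of_mem_erase hk)) v _).symm
  · intro o ho
    rw [Literal.eval_update_of_node_ne fun hog ↦ hocc (.inr ⟨o, ho, hog⟩)]
    exact hv.2 o ho

theorem addOutput (h : P.Computes X f) {o : Literal V} (ho : ∀ v, P.Sat v → o.eval v = true) :
    (P.addOutput o).Computes X f :=
  h.transfer h.ordered subset_rfl
    (fun v hv ↦ ⟨v, ⟨hv.1, fun p hp ↦ hv.2 p (Finset.mem_insert_of_mem hp)⟩, Set.eqOn_refl v X⟩)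
    fun v hv ↦ ⟨hv.1, (Finset.forall_mem_insert _ _ _).2 ⟨ho v hv, hv.2⟩⟩

theorem eraseOutput (h : P.Computes X f) {o : Literal V} (ho : ∀ v, o.eval v = true) :
    { P with outputs := P.outputs.erase o }.Computes X f :=
  h.transfer h.ordered subset_rfl
    (fun v hv ↦ ⟨v, ⟨hv.1, fun p hp ↦ by
      rcases eq_or_ne p o with rfl | hpo
      · exact ho v
      · exact hv.2 p (Finset.mem_erase.2 ⟨hpo, hp⟩)⟩, Set.eqOn_refl v X⟩)
    fun v hv ↦ ⟨hv.1, fun p hp ↦ hv.2 p (Finset.mem_of_mem_erase hp)⟩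

theorem not_sat_flip (h : P.Computes X f) (hf : Alternating X f) {i : V} (hi : i ∈ X)
    {v : V → Bool} (hv : P.Sat v) : ¬P.Sat (Function.update v i (!v i)) :=
  fun hflip ↦ (hf i hi v).1 (h.of_sat hflip) (h.of_sat hv)

theorem output_node_ne (h : P.Computes X f) {i : V} (hi : i ∈ X)
    (hsat : ∀ b, ∃ x, f (Function.update x i b)) {o : Literal V} (ho : o ∈ P.outputs) :
    o.node ≠ some i := by
  intro hoi
  obtain ⟨x, hx⟩ := hsat o.neg
  obtain ⟨v, hv, hvx⟩ := (h.spec _).1 hx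
  have hvi : v i = o.neg := by rw [hvx hi, Function.update_self]
  simpa [Literal.eval, hoi, hvi] using hv.2 o ho

end Computes

/-! ### Gate elimination -/

section GateElimination

variable [DecidableEq V] [Preorder V] {P : AndCircuit V} {X : Finset V} {f : (V → Bool) → Prop}

theorem Ordered.subst (h : P.Ordered) {n : V} {l : Literal V} (hl : l.Below n) :
    (P.subst n l).Ordered :=
  fun g hg s ↦ hl.subst (h g (Finset.mem_of_mem_erase hg) s)

namespace Computes

theorem subst (h : P.Computes X f) {g : V} (hg : g ∈ P.gates) {l : Literal V} (hl : l.Below g)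
    (heval : ∀ v, (∀ o ∈ P.outputs, o.eval v = true) → l.eval v = P.gateVal v g) :
    (P.subst g l).Computes X f := by
  refine h.transfer (h.ordered.subst hl) (Finset.erase_subset _ _) (fun v hv ↦ ?_) fun v hv ↦ ?_
  · rw [sat_subst] at hv
    refine ⟨_, (sat_iff_eraseGate hg _).2 ⟨?_, hv⟩, h.eqOn_update hg v _⟩
    rw [← heval _ hv.2, Function.update_self, Literal.eval_update_of_node_ne hl.node_ne]
  · rw [sat_subst, heval v hv.2, ← hv.1 g hg, Function.update_eq_self]
    exact ((sat_iff_eraseGate hg v).1 hv).2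

theorem restrict (h : P.Computes X f) {i : V} (hi : i ∈ X) (b : Bool) :
    (P.subst i (.const b)).Computes (X.erase i) fun x ↦ f (Function.update x i b) where
  ordered := h.ordered.subst (Literal.below_const i b)
  disjoint := h.disjoint.mono (Finset.erase_subset _ _) (Finset.erase_subset _ _)
  spec x := by
    simp only [sat_subst, eraseGate_of_notMem (h.notMem_gates hi), Literal.eval_const]
    rw [h.spec]
    constructor
    · rintro ⟨v, hv, hvx⟩
      have hvi : v i = b := by rw [hvx hi, Function.update_self]
      refine ⟨v, by rwa [← hvi, Function.update_eq_self], fun j hj ↦ ?_⟩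
      rw [hvx (Finset.mem_of_mem_erase hj), Function.update_of_ne (Finset.ne_of_mem_erase hj)]
    · rintro ⟨v, hv, hvx⟩
      refine ⟨_, hv, fun j hj ↦ ?_⟩
      rcases eq_or_ne j i with rfl | hji
      · simp only [Function.update_self]
      · rw [Function.update_of_ne hji, Function.update_of_ne hji,
          hvx (Finset.mem_erase.2 ⟨hji, hj⟩)]

theorem exists_subst_of_degenerate (h : P.Computes X f) {g : V} (hg : g ∈ P.gates) {s : Bool}
    (hs : (P.fanin g s).node = none ∨ (P.fanin g s).node = (P.fanin g (!s)).node) :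
    ∃ l : Literal V, (l.node = none ∨ l.node = (P.fanin g (!s)).node) ∧
      (P.subst g l).Computes X f := by
  obtain ⟨l, hl, heval⟩ := P.exists_literal_eval_eq_gateVal hs
  exact ⟨l, hl, h.subst hg ((h.ordered g hg (!s)).of_node_eq hl) fun v _ ↦ heval v⟩

omit [DecidableEq V] in
theorem exists_cost_lt_of_occurs_const (h : P.Computes X f) (hsat : ∃ x, f x)
    (hocc : P.Occurs none) :
    ∃ Q : AndCircuit V, Q.Computes X f ∧ Q.gates.card ≤ P.gates.card ∧ Q.cost + 1 ≤ P.cost := by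
  classical
  rcases hocc with ⟨g, hg, s, hs⟩ | ⟨o, ho, hconst⟩
  · obtain ⟨l, -, hQ⟩ := h.exists_subst_of_degenerate hg (.inl hs)
    exact ⟨_, hQ, Finset.card_erase_le, cost_subst_add_one_le hg l⟩
  · have heval : ∀ v, o.eval v = o.neg := fun v ↦ by simp [Literal.eval, hconst]
    obtain ⟨x, hx⟩ := hsat
    obtain ⟨w, hw, -⟩ := (h.spec x).1 hx
    refine ⟨_, h.eraseOutput (o := o) fun v ↦ ?_, le_rfl, ?_⟩
    · rw [heval, ← heval w, hw.2 o ho]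
    · rw [cost, add_assoc, Finset.card_erase_add_one ho, cost]

theorem subst_const_false (h : P.Computes X f) {g : V} (hg : g ∈ P.gates) {s : Bool}
    (hs : P.fanin g s = .const false) : (P.subst g (.const false)).Computes X f :=
  h.subst hg (Literal.below_const g false) fun v _ ↦ by
    rw [P.gateVal_eq v g s, hs, Literal.eval_const, Bool.false_and]

theorem exists_cost_add_two_le_of_subst_const (h : P.Computes X f) (hsat : ∃ x, f x) {g : V}
    (hg : g ∈ P.gates) (hocc : P.Occurs (some g)) {l : Literal V} (hl : l.node = none)
    (hsubst : (P.subst g l).Computes X f) :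
    ∃ Q : AndCircuit V, Q.Computes X f ∧ Q.gates.card < P.gates.card ∧ Q.cost + 2 ≤ P.cost := by
  have hconst : (P.subst g l).Occurs none :=
    hl ▸ hocc.subst_node (fun _ ↦ h.ordered.not_reads_self hg) l
  obtain ⟨Q, hQ, hgates, hcost⟩ := hsubst.exists_cost_lt_of_occurs_const hsat hconst
  have := card_gates_subst_add_one hg l
  have := cost_subst_add_one_le hg l
  exact ⟨Q, hQ, by omega, by omega⟩

omit [DecidableEq V] in
/-- The gate substituted second is chosen not to be read by the other one, so that the constant
substituted for it still occurs afterwards, which saves the third unit. -/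
theorem exists_cost_add_three_le_of_fanin_const (h : P.Computes X f) (hsat : ∃ x, f x) {g k : V}
    (hg : g ∈ P.gates) (hk : k ∈ P.gates) (hgk : g ≠ k) {s t : Bool}
    (hs : P.fanin g s = .const false) (ht : (P.fanin k t).node = none)
    (hoccg : P.Occurs (some g)) (hocck : P.Occurs (some k)) :
    ∃ Q : AndCircuit V, Q.Computes X f ∧ Q.gates.card < P.gates.card ∧ Q.cost + 3 ≤ P.cost := by
  classical
  by_cases hkg : P.Reads k (some g)
  · have hg' := h.subst_const_false hg hs
    have hk' : k ∈ (P.subst g (.const false)).gates := Finset.mem_erase.2 ⟨hgk.symm, hk⟩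
    have hocck' : (P.subst g (.const false)).Occurs (some k) :=
      hocck.subst (by simpa using hgk.symm) fun _ ↦ h.ordered.not_reads_of_reads hg hk hkg
    obtain ⟨u, hu⟩ := hkg
    obtain rfl : u = !t := Bool.eq_not_of_ne fun hut ↦ by simp [← hut, hu] at ht
    have ht' : ((P.subst g (.const false)).fanin k t).node = none := by
      rw [fanin_subst, Literal.subst_of_node_ne (by simp [ht]), ht]
    have hu' : ((P.subst g (.const false)).fanin k (!t)).node = none := by
      simp [fanin_subst, Literal.subst, hu]
    obtain ⟨l, hl, hsubst⟩ := hg'.exists_subst_of_degenerate hk' (.inl ht')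
    rw [hu', or_self] at hl
    obtain ⟨Q, hQ, hgates, hcost⟩ :=
      hg'.exists_cost_add_two_le_of_subst_const hsat hk' hocck' hl hsubst
    have := card_gates_subst_add_one hg (.const false)
    have := cost_subst_add_one_le hg (.const false)
    exact ⟨Q, hQ, by omega, by omega⟩
  · obtain ⟨l, -, hk'⟩ := h.exists_subst_of_degenerate hk (.inl ht)
    have hg' : g ∈ (P.subst k l).gates := Finset.mem_erase.2 ⟨hgk, hg⟩
    have hoccg' : (P.subst k l).Occurs (some g) := hoccg.subst (by simpa using hgk) fun _ ↦ hkg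
    have hs' : (P.subst k l).fanin g s = .const false := by
      rw [fanin_subst, hs, Literal.subst_of_node_ne (by simp)]
    obtain ⟨Q, hQ, hgates, hcost⟩ :=
      hk'.exists_cost_add_two_le_of_subst_const hsat hg' hoccg' rfl (hk'.subst_const_false hg' hs')
    have := card_gates_subst_add_one hk l
    have := cost_subst_add_one_le hk l
    exact ⟨Q, hQ, by omega, by omega⟩

/-- Here `b` is the value of `i` that falsifies a fan-in of `g`. -/
theorem exists_restrict_of_two_readers (h : P.Computes X f) {i : V} (hi : i ∈ X)
    (hsat : ∀ b, ∃ x, f (Function.update x i b)) {g k : V} (hg : g ∈ P.gates) (hk : k ∈ P.gates)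
    (hgk : g ≠ k) (hgi : P.Reads g (some i)) (hki : P.Reads k (some i))
    (hoccg : P.Occurs (some g)) (hocck : P.Occurs (some k)) :
    ∃ (Q : AndCircuit V) (b : Bool), Q.Computes (X.erase i) (fun x ↦ f (Function.update x i b)) ∧
      Q.gates.card < P.gates.card ∧ Q.cost + 3 ≤ P.cost := by
  have hiP := h.notMem_gates hi
  obtain ⟨s, hs⟩ := hgi
  set b := (P.fanin g s).neg
  have hocc {a : V} (ha : a ∈ P.gates) (hocca : P.Occurs (some a)) :
      (P.subst i (.const b)).Occurs (some a) :=
    hocca.subst (by simpa using ne_of_mem_of_not_mem ha hiP) fun hi' ↦ absurd hi' hiP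
  obtain ⟨t, ht⟩ := hki.subst_node (.const b)
  have hconst : (P.subst i (.const b)).fanin g s = .const false := by
    simp [fanin_subst, Literal.subst, hs, b, Literal.const]
  have hgates : (P.subst i (.const b)).gates = P.gates := Finset.erase_eq_of_notMem hiP
  obtain ⟨Q, hQ, hlt, hcost⟩ := (h.restrict hi b).exists_cost_add_three_le_of_fanin_const (hsat b)
    (by rwa [hgates]) (by rwa [hgates]) hgk hconst ht (hocc hg hoccg) (hocc hk hocck)
  exact ⟨Q, b, hQ, hlt.trans_le Finset.card_erase_le,
    hcost.trans (cost_subst_le P i (.const b))⟩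

/-- Only `g` can notice a flip of `i`, so its other fan-in is true under every satisfying
assignment. Requiring this by an additional output turns `g` into a literal. -/
theorem exists_card_gates_lt_of_unique_reader (h : P.Computes X f) (hf : Alternating X f) {i : V}
    (hi : i ∈ X) (hout : ∀ o ∈ P.outputs, o.node ≠ some i) {g : V} (hg : g ∈ P.gates)
    (hgi : P.Reads g (some i)) (hunique : ∀ k ∈ P.gates, P.Reads k (some i) → k = g) :
    ∃ Q : AndCircuit V, Q.Computes X f ∧ Q.gates.card < P.gates.card ∧ Q.cost ≤ P.cost := by
  obtain ⟨s, hs⟩ := hgi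
  by_cases hs' : (P.fanin g (!s)).node = some i
  · obtain ⟨l, -, hQ⟩ := h.exists_subst_of_degenerate hg (.inr (hs.trans hs'.symm))
    exact ⟨_, hQ, Finset.card_erase_lt_of_mem hg, cost_subst_le P g l⟩
  have htrue : ∀ v, P.Sat v → (P.fanin g (!s)).eval v = true := by
    intro v hv
    obtain ⟨k, hk, hki, hsens⟩ :=
      hv.exists_sensitive_gate (h.notMem_gates hi) hout (h.not_sat_flip hf hi hv)
    obtain rfl := hunique k hk hki
    exact (hsens (!s)).resolve_left hs'
  have hQ := (h.addOutput htrue).subst hg (h.ordered g hg s) fun v hv ↦ by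
    have hv' : ((P.addOutput (P.fanin g (!s))).fanin g (!s)).eval v = true :=
      hv _ (Finset.mem_insert_self _ _)
    rw [gateVal_eq _ v g s, hv', Bool.and_true]
    rfl
  have := cost_subst_add_one_le (P := P.addOutput (P.fanin g (!s))) hg (P.fanin g s)
  have := cost_addOutput_le P (P.fanin g (!s))
  exact ⟨_, hQ, Finset.card_erase_lt_of_mem hg, by omega⟩

/-- Either an input is fixed, which saves three units of cost, or the inputs stay the same and a
gate is removed without raising the cost. -/
theorem exists_reduction (h : P.Computes X f) (hf : Alternating X f) (hX : X.Nontrivial) :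
    ∃ (Q : AndCircuit V) (Y : Finset V) (f' : (V → Bool) → Prop), Q.Computes Y f' ∧
      Alternating Y f' ∧ Y.Nonempty ∧ Q.gates.card < P.gates.card ∧
      Q.cost + 3 * X.card ≤ P.cost + 3 * Y.card := by
  by_cases hocc : ∀ g ∈ P.gates, P.Occurs (some g)
  swap
  · push Not at hocc
    obtain ⟨g, hg, hocc⟩ := hocc
    exact ⟨_, X, f, h.eraseGate hg hocc, hf, hX.nonempty, Finset.card_erase_lt_of_mem hg,
      Nat.add_le_add_right (Nat.add_le_add_right Finset.card_erase_le _) _⟩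
  obtain ⟨i, hi⟩ := hX.nonempty
  have hsat (b : Bool) := (hf.restrict i b).exists_true (hX.erase_nonempty)
  have hout : ∀ o ∈ P.outputs, o.node ≠ some i := fun o ho ↦ h.output_node_ne hi hsat ho
  obtain ⟨x, hx⟩ := hf.exists_true hX.nonempty
  obtain ⟨v, hv, -⟩ := (h.spec x).1 hx
  obtain ⟨g, hg, hgi, -⟩ :=
    hv.exists_sensitive_gate (h.notMem_gates hi) hout (h.not_sat_flip hf hi hv)
  by_cases hunique : ∀ k ∈ P.gates, P.Reads k (some i) → k = g
  · obtain ⟨Q, hQ, hgates, hcost⟩ :=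
      h.exists_card_gates_lt_of_unique_reader hf hi hout hg hgi hunique
    exact ⟨Q, X, f, hQ, hf, hX.nonempty, hgates, Nat.add_le_add_right hcost _⟩
  · push Not at hunique
    obtain ⟨k, hk, hki, hkg⟩ := hunique
    obtain ⟨Q, b, hQ, hgates, hcost⟩ := h.exists_restrict_of_two_readers hi hsat hg hk hkg.symm
      hgi hki (hocc g hg) (hocc k hk)
    have := Finset.card_erase_add_one hi
    exact ⟨Q, X.erase i, _, hQ, hf.restrict i b, hX.erase_nonempty, hgates, by omega⟩

theorem three_mul_card_le (h : P.Computes X f) (hf : Alternating X f) (hX : X.Nonempty) :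
    3 * X.card ≤ P.cost + 2 := by
  induction hn : P.gates.card using Nat.strong_induction_on generalizing P X f with
  | _ n ih =>
    obtain ⟨i, rfl⟩ | hX' := hX.exists_eq_singleton_or_nontrivial
    · have := h.cost_pos (hf.exists_false hX)
      rw [Finset.card_singleton]
      omega
    · obtain ⟨Q, Y, f', hQ, hf', hY, hgates, hcost⟩ := h.exists_reduction hf hX'
      have := ih _ (hn ▸ hgates) hQ hf' hY rfl
      omega

end Computes

end GateElimination

end AndCircuit

/-! ### Translation of `U₂`-circuits -/

theorem IsU2.exists_eq_xor_and {f : Bool → Bool → Bool} (hf : IsU2 f) :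
    ∃ (neg : Bool) (φ : Bool → Bool → Bool), ∀ a b, f a b = xor neg (φ false a && φ true b) := by
  revert f
  unfold IsU2
  decide

namespace Circuit

section Wires

variable {ι : Type} (C : Circuit ι)

/-- The two incoming wires of the gate `g`, with their gates viewed as gates of `C`. -/
def wire (g : Fin C.size) (s : Bool) : (ι ⊕ Bool) ⊕ Fin C.size :=
  (bif s then C.in2 g else C.in1 g).map id (Fin.castLE g.isLt.le)

/-- The value carried by a wire on the input assignment `x`. -/
def wireVal (x : ι → Bool) : (ι ⊕ Bool) ⊕ Fin C.size → Bool :=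
  Sum.elim (Sum.elim x id) (C.nodeVal x)

theorem nodeVal_eq_wireVal (x : ι → Bool) (g : Fin C.size) :
    C.nodeVal x g = C.gate g (C.wireVal x (C.wire g false)) (C.wireVal x (C.wire g true)) := by
  rw [nodeVal]
  congr 1 <;> simp only [wire, cond_true, cond_false]
  · rcases C.in1 g with (i | b) | h <;> rfl
  · rcases C.in2 g with (i | b) | h <;> rfl

theorem eval_eq_wireVal (x : ι → Bool) : C.eval x = C.wireVal x C.out := by
  unfold eval
  rcases C.out with (i | b) | g <;> rfl

theorem lt_of_wire_eq {g h : Fin C.size} {s : Bool} (hw : C.wire g s = .inr h) : h < g := by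
  unfold wire at hw
  rcases hb : (bif s then C.in2 g else C.in1 g) with w | k <;> rw [hb] at hw
  · cases hw
  · cases hw
    exact k.isLt

end Wires

section ToAndCircuit

open Sum (inlₗ inrₗ)

variable {ι : Type} (C : Circuit ι) (neg : Fin C.size → Bool)
  (φ : Fin C.size → Bool → Bool → Bool)

/-- The literal that carries the value of a wire of `C` when the node of the gate `h` stands for the
value of `h`, negated if `neg h` is set. -/
def wireLiteral : (ι ⊕ Bool) ⊕ Fin C.size → Literal (ι ⊕ₗ Fin C.size)
  | .inl (.inl i) => ⟨some (inlₗ i), false⟩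
  | .inl (.inr b) => .const b
  | .inr h => ⟨some (inrₗ h), neg h⟩

theorem eval_wireLiteral {v : ι ⊕ₗ Fin C.size → Bool} {w : (ι ⊕ Bool) ⊕ Fin C.size}
    (hw : ∀ h, w = .inr h → v (inrₗ h) = xor (neg h) (C.nodeVal (v ∘ inlₗ) h)) :
    (C.wireLiteral neg w).eval v = C.wireVal (v ∘ inlₗ) w := by
  rcases w with (i | b) | h
  · exact Bool.xor_false _
  · exact Literal.eval_const v b
  · simp [wireLiteral, Literal.eval, wireVal, hw h rfl, Bool.xor_comm (neg h)]

theorem below_wireLiteral [Preorder ι] {g : Fin C.size} {w : (ι ⊕ Bool) ⊕ Fin C.size}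
    (hw : ∀ h, w = .inr h → h < g) : (C.wireLiteral neg w).Below (inrₗ g) := by
  rcases w with (i | b) | h
  · rintro _ ⟨⟩
    exact Sum.Lex.inl_lt_inr i g
  · exact Literal.below_const _ b
  · rintro _ ⟨⟩
    exact Sum.Lex.inr_lt_inr_iff.2 (hw h rfl)

/-- The circuit `C` as an AND-circuit, for `C` whose gate `g` maps `a` and `b` to
`xor (neg g) (φ g false a && φ g true b)`. The node of `g` stands for the AND only, so the literals
that carry the value of `g` take care of `neg g`. -/
def toAndCircuit : AndCircuit (ι ⊕ₗ Fin C.size) where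
  gates := Finset.univ.map (Function.Embedding.inr.trans toLex.toEmbedding)
  fanin := Sum.elim (fun _ _ ↦ .const false) fun g s ↦ (C.wireLiteral neg (C.wire g s)).map (φ g s)
  outputs := {C.wireLiteral neg C.out}

theorem cost_toAndCircuit : (C.toAndCircuit neg φ).cost = C.size + 1 := by
  simp [AndCircuit.cost, toAndCircuit]

theorem fanin_toAndCircuit (g : Fin C.size) (s : Bool) :
    (C.toAndCircuit neg φ).fanin (inrₗ g) s = (C.wireLiteral neg (C.wire g s)).map (φ g s) := rfl

theorem forall_mem_gates_toAndCircuit {p : ι ⊕ₗ Fin C.size → Prop} :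
    (∀ g ∈ (C.toAndCircuit neg φ).gates, p g) ↔ ∀ g : Fin C.size, p (inrₗ g) := by
  simp [toAndCircuit]

theorem ordered_toAndCircuit [Preorder ι] : (C.toAndCircuit neg φ).Ordered :=
  (C.forall_mem_gates_toAndCircuit neg φ).2 fun _ _ ↦
    (C.below_wireLiteral neg fun _ ↦ C.lt_of_wire_eq).map _

variable {C neg φ} (hgate : ∀ g a b, C.gate g a b = xor (neg g) (φ g false a && φ g true b))
include hgate

theorem gateVal_toAndCircuit {v : ι ⊕ₗ Fin C.size → Bool} {g : Fin C.size}
    (hv : ∀ h < g, v (inrₗ h) = xor (neg h) (C.nodeVal (v ∘ inlₗ) h)) :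
    (C.toAndCircuit neg φ).gateVal v (inrₗ g) = xor (neg g) (C.nodeVal (v ∘ inlₗ) g) := by
  have hwire (s : Bool) := C.eval_wireLiteral neg (w := C.wire g s) fun h hw ↦
    hv h (C.lt_of_wire_eq hw)
  rw [nodeVal_eq_wireVal, hgate, ← Bool.xor_assoc, Bool.xor_self, Bool.false_xor,
    AndCircuit.gateVal, fanin_toAndCircuit, fanin_toAndCircuit, Literal.eval_map,
    Literal.eval_map, hwire, hwire]

theorem sat_toAndCircuit (v : ι ⊕ₗ Fin C.size → Bool) :
    (C.toAndCircuit neg φ).Sat v ↔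
      (∀ g, v (inrₗ g) = xor (neg g) (C.nodeVal (v ∘ inlₗ) g)) ∧ C.eval (v ∘ inlₗ) = true := by
  have hgates : (∀ g ∈ (C.toAndCircuit neg φ).gates, v g = (C.toAndCircuit neg φ).gateVal v g) ↔
      ∀ g, v (inrₗ g) = xor (neg g) (C.nodeVal (v ∘ inlₗ) g) := by
    rw [forall_mem_gates_toAndCircuit]
    refine ⟨fun h g ↦ ?_, fun h g ↦ ?_⟩
    · induction g using WellFoundedLT.induction with
      | ind g ih => rw [h g, gateVal_toAndCircuit hgate ih]
    · rw [gateVal_toAndCircuit hgate fun k _ ↦ h k, h g]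
  rw [AndCircuit.Sat, hgates]
  refine and_congr_right fun hv ↦ ?_
  rw [eval_eq_wireVal, ← C.eval_wireLiteral neg fun h _ ↦ hv h]
  simp only [toAndCircuit, Finset.mem_singleton, forall_eq]

end ToAndCircuit

section Nondeterministic

variable {n m : ℕ} {C : Circuit (Fin n ⊕ Fin m)} {f : (Fin n → Bool) → Bool}

variable (C) in
/-- The node of the `i`-th actual input in the AND-circuits obtained from `C`. -/
def inputNode (i : Fin n) : (Fin n ⊕ Fin m) ⊕ₗ Fin C.size := Sum.inlₗ (.inl i)

variable (C) in
theorem inputNode_injective : Function.Injective C.inputNode :=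
  toLex.injective.comp (Sum.inl_injective.comp Sum.inl_injective)

theorem ComputesND.toAndCircuit (hC : C.ComputesND f) {neg : Fin C.size → Bool}
    {φ : Fin C.size → Bool → Bool → Bool}
    (hgate : ∀ g a b, C.gate g a b = xor (neg g) (φ g false a && φ g true b)) :
    (C.toAndCircuit neg φ).Computes (Finset.univ.image C.inputNode)
      fun x ↦ f (x ∘ C.inputNode) = true where
  ordered := C.ordered_toAndCircuit neg φ
  disjoint := by
    simp [Finset.disjoint_left, Circuit.toAndCircuit, inputNode]
  spec x := by
    simp only [hC _, sat_toAndCircuit hgate, Finset.coe_image, Finset.coe_univ, Set.image_univ,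
      Set.eqOn_range]
    constructor
    · rintro ⟨y, hy⟩
      set z := Sum.elim (x ∘ C.inputNode) y
      exact ⟨Sum.elim z fun g ↦ xor (neg g) (C.nodeVal z g), ⟨fun _ ↦ rfl, hy⟩, rfl⟩
    · rintro ⟨v, ⟨-, hv⟩, hvx⟩
      refine ⟨fun j ↦ v (Sum.inlₗ (.inr j)), ?_⟩
      have hinputs : Sum.elim (v ∘ C.inputNode) (fun j ↦ v (Sum.inlₗ (.inr j))) = v ∘ Sum.inlₗ :=
        Sum.elim_comp_inl_inr (v ∘ Sum.inlₗ)
      rwa [← hvx, hinputs]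

end Nondeterministic

end Circuit

theorem parity_update_not {n : ℕ} (x : Fin n → Bool) (i : Fin n) :
    parity n (Function.update x i (!x i)) = !parity n x := by
  have hrest : ∑ j ∈ Finset.univ.erase i, (Function.update x i (!x i) j).toNat =
      ∑ j ∈ Finset.univ.erase i, (x j).toNat :=
    Finset.sum_congr rfl fun j hj ↦ by rw [Function.update_of_ne (Finset.ne_of_mem_erase hj)]
  rw [parity, parity, ← Finset.add_sum_erase _ _ (Finset.mem_univ i), hrest,
    ← Finset.add_sum_erase _ (fun j ↦ (x j).toNat) (Finset.mem_univ i), Function.update_self,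
    ← decide_not, decide_eq_decide]
  cases x i <;> simp only [Bool.not_true, Bool.not_false, Bool.toNat_true, Bool.toNat_false] <;>
    omega

theorem parity_ndU2_lower_bound_general {n m : ℕ} {C : Circuit (Fin n ⊕ Fin m)}
    (hU2 : C.IsU2Circuit) {f : (Fin n → Bool) → Bool}
    (hf : ∀ x i, f (Function.update x i (!x i)) = !f x) (hC : C.ComputesND f) :
    3 * n ≤ C.size + 3 := by
  obtain rfl | hn := Nat.eq_zero_or_pos n
  · exact Nat.zero_le _
  choose neg φ hgate using fun g ↦ (hU2 g).exists_eq_xor_and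
  have hX : (Finset.univ.image C.inputNode).Nonempty := ⟨C.inputNode ⟨0, hn⟩, by simp⟩
  have hcost := (hC.toAndCircuit hgate).three_mul_card_le
    (.of_injective C.inputNode_injective hf) hX
  rwa [Finset.card_image_of_injective _ C.inputNode_injective, Finset.card_fin,
    C.cost_toAndCircuit] at hcost

/-- For every `n ≥ 2`, every nondeterministic `U₂`-circuit
computing `Parity_n` (with any number `m` of guess inputs) has at least
`3(n-1)` gates. -/
theorem parity_ndU2_lower_bound (n : ℕ) (hn : 2 ≤ n) (m : ℕ)
    (C : Circuit (Fin n ⊕ Fin m)) (hU2 : C.IsU2Circuit)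
    (hC : C.ComputesND (parity n)) :
    3 * (n - 1) ≤ C.size := by
  have := parity_ndU2_lower_bound_general hU2 parity_update_not hC
  omega
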